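/- Let T be an invertible n×n real matrix with T x = e₁ and T y = e_n (where e₁ and e_n are the first and last standard basis vectors of ℝⁿ), and assume the Gohberg–Semencul identity T⁻¹ = GSF(x,y) holds. Let x̃, ỹ ∈ ℝⁿ with first entry ξ̃₀ of x̃ nonzero, let ε > 0 satisfy ‖x̃ − x‖₁ ≤ ε‖x‖₁ and ‖ỹ − y‖₁ ≤ ε‖y‖₁, and set ε̃ = |1/ξ₀ − 1/ξ̃₀| / |1/ξ₀|, where ξ₀ ≠ 0 is the first entry of x. Then ‖T⁻¹ − GSF(x̃,ỹ)‖₁ / ‖T⁻¹‖₁ ≤ (‖T‖₁ ‖y‖₁ ‖x‖₁ / |ξ₀|)·2·[ε + (ε + (1+ε)ε̃)(1+ε)]. -/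

import Mathlib

/-!
The Gohberg–Semencul expression is `(x 0)⁻¹ • B x y`, where `B x y = L_x R_y - L⁰_y R⁰_x` is bilinear.
Every column of each Toeplitz factor lists distinct entries of its defining vector, so each factor has
1-norm at most the ℓ¹ norm of that vector (`matNorm1_le_of_dite`), and hence
`‖B x y‖₁ ≤ 2 ‖x‖₁ ‖y‖₁` (`matNorm1_gsForm_le`). Writing
`GSF x y - GSF x̃ ỹ = B (ξ₀⁻¹ x) (y - ỹ) + B (ξ₀⁻¹ x - ξ̃₀⁻¹ x̃) ỹ`
bounds the absolute error, and `1 ≤ ‖T‖₁ ‖T⁻¹‖₁` converts it to a relative one.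
-/

open Matrix

noncomputable section

/-- ℓ¹ norm of a vector. -/
def vecNorm1 {n : ℕ} (x : Fin n → ℝ) : ℝ := ∑ i, |x i|

/-- ℓ² norm of a vector. -/
def vecNorm2 {n : ℕ} (x : Fin n → ℝ) : ℝ := Real.sqrt (∑ i, (x i) ^ 2)

/-- Matrix operator norm induced by the ℓ¹ vector norm (max absolute column sum). -/
def matNorm1 {n : ℕ} (M : Matrix (Fin n) (Fin n) ℝ) : ℝ := ⨆ j, ∑ i, |M i j|

/-- Matrix operator norm induced by the ℓ∞ vector norm (max absolute row sum). -/
def matNormInf {n : ℕ} (M : Matrix (Fin n) (Fin n) ℝ) : ℝ := ⨆ i, ∑ j, |M i j|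

/-- Spectral norm: operator norm induced by the ℓ² vector norm. -/
def matNorm2 {n : ℕ} (M : Matrix (Fin n) (Fin n) ℝ) : ℝ :=
  ‖Matrix.toEuclideanCLM (𝕜 := ℝ) M‖

/-- The last index of `Fin n`. -/
def lastIdx (n : ℕ) [NeZero n] : Fin n := ⟨n - 1, by have := Nat.pos_of_neZero n; omega⟩

/-- Lower triangular Toeplitz matrix built from `x`. -/
def Lmat {n : ℕ} (x : Fin n → ℝ) : Matrix (Fin n) (Fin n) ℝ :=
  Matrix.of fun i j =>
    if (j : ℕ) ≤ i then x ⟨(i : ℕ) - j, lt_of_le_of_lt (Nat.sub_le _ _) i.isLt⟩ else 0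

/-- Upper triangular Toeplitz matrix built from `y`. -/
def Rmat {n : ℕ} (y : Fin n → ℝ) : Matrix (Fin n) (Fin n) ℝ :=
  Matrix.of fun i j =>
    if (i : ℕ) ≤ j then y ⟨n - 1 - ((j : ℕ) - i), by have := i.isLt; omega⟩ else 0

/-- Strictly lower triangular Toeplitz matrix built from `y`. -/
def L0mat {n : ℕ} (y : Fin n → ℝ) : Matrix (Fin n) (Fin n) ℝ :=
  Matrix.of fun i j =>
    if (j : ℕ) < i then y ⟨(i : ℕ) - j - 1, by have := i.isLt; omega⟩ else 0

/-- Strictly upper triangular Toeplitz matrix built from `x`. -/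
def R0mat {n : ℕ} (x : Fin n → ℝ) : Matrix (Fin n) (Fin n) ℝ :=
  Matrix.of fun i j =>
    if h : (i : ℕ) < j then x ⟨n - ((j : ℕ) - i), by have := j.isLt; omega⟩ else 0

/-- The Gohberg–Semencul expression. -/
def GSF {n : ℕ} [NeZero n] (x y : Fin n → ℝ) : Matrix (Fin n) (Fin n) ℝ :=
  (x 0)⁻¹ • (Lmat x * Rmat y - L0mat y * R0mat x)

section Norms

variable {n : ℕ}

lemma vecNorm1_nonneg (x : Fin n → ℝ) : 0 ≤ vecNorm1 x :=
  Finset.sum_nonneg fun _ _ => abs_nonneg _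

lemma vecNorm1_add_le (x y : Fin n → ℝ) : vecNorm1 (x + y) ≤ vecNorm1 x + vecNorm1 y := by
  unfold vecNorm1
  rw [← Finset.sum_add_distrib]
  exact Finset.sum_le_sum fun i _ => abs_add_le _ _

lemma vecNorm1_smul (c : ℝ) (x : Fin n → ℝ) : vecNorm1 (c • x) = |c| * vecNorm1 x := by
  simp [vecNorm1, abs_mul, Finset.mul_sum]

lemma vecNorm1_sub_comm (x y : Fin n → ℝ) : vecNorm1 (x - y) = vecNorm1 (y - x) := by
  simp [vecNorm1, abs_sub_comm]

lemma col_le_matNorm1 (M : Matrix (Fin n) (Fin n) ℝ) (j : Fin n) :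
    ∑ i, |M i j| ≤ matNorm1 M :=
  le_ciSup (f := fun j => ∑ i, |M i j|) (Set.finite_range _).bddAbove j

lemma matNorm1_nonneg (M : Matrix (Fin n) (Fin n) ℝ) : 0 ≤ matNorm1 M :=
  Real.iSup_nonneg fun _ => Finset.sum_nonneg fun _ _ => abs_nonneg _

lemma matNorm1_le {M : Matrix (Fin n) (Fin n) ℝ} {c : ℝ} (hc : 0 ≤ c)
    (h : ∀ j, ∑ i, |M i j| ≤ c) : matNorm1 M ≤ c :=
  Real.iSup_le h hc

lemma matNorm1_add_le (A B : Matrix (Fin n) (Fin n) ℝ) :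
    matNorm1 (A + B) ≤ matNorm1 A + matNorm1 B := by
  refine matNorm1_le (add_nonneg (matNorm1_nonneg A) (matNorm1_nonneg B)) fun j => ?_
  refine le_trans ?_ (add_le_add (col_le_matNorm1 A j) (col_le_matNorm1 B j))
  rw [← Finset.sum_add_distrib]
  exact Finset.sum_le_sum fun i _ => abs_add_le _ _

lemma matNorm1_sub_le (A B : Matrix (Fin n) (Fin n) ℝ) :
    matNorm1 (A - B) ≤ matNorm1 A + matNorm1 B := by
  refine matNorm1_le (add_nonneg (matNorm1_nonneg A) (matNorm1_nonneg B)) fun j => ?_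
  refine le_trans ?_ (add_le_add (col_le_matNorm1 A j) (col_le_matNorm1 B j))
  rw [← Finset.sum_add_distrib]
  exact Finset.sum_le_sum fun i _ => abs_sub _ _

lemma matNorm1_mul_le (A B : Matrix (Fin n) (Fin n) ℝ) :
    matNorm1 (A * B) ≤ matNorm1 A * matNorm1 B := by
  refine matNorm1_le (mul_nonneg (matNorm1_nonneg A) (matNorm1_nonneg B)) fun j => ?_
  calc ∑ i, |(A * B) i j| ≤ ∑ i, ∑ k, |A i k| * |B k j| := by
        refine Finset.sum_le_sum fun i _ => ?_
        rw [Matrix.mul_apply]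
        refine (Finset.abs_sum_le_sum_abs _ _).trans (le_of_eq ?_)
        simp [abs_mul]
    _ = ∑ k, (∑ i, |A i k|) * |B k j| := by
        rw [Finset.sum_comm]
        simp [Finset.sum_mul]
    _ ≤ ∑ k, matNorm1 A * |B k j| :=
        Finset.sum_le_sum fun k _ =>
          mul_le_mul_of_nonneg_right (col_le_matNorm1 A k) (abs_nonneg _)
    _ = matNorm1 A * ∑ k, |B k j| := by rw [Finset.mul_sum]
    _ ≤ matNorm1 A * matNorm1 B :=
        mul_le_mul_of_nonneg_left (col_le_matNorm1 B j) (matNorm1_nonneg A)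

lemma matNorm1_one [NeZero n] : matNorm1 (1 : Matrix (Fin n) (Fin n) ℝ) = 1 := by
  have h : ∀ j : Fin n, ∑ i, |(1 : Matrix (Fin n) (Fin n) ℝ) i j| = 1 := fun j => by
    rw [Finset.sum_eq_single j] <;> simp +contextual
  simp [matNorm1, h]

/-- If each column of `M` consists of zeros and of entries of `x` at pairwise distinct positions
(position `f i j` in place `(i, j)`), then its 1-norm is at most that of `x`. -/
lemma matNorm1_le_of_dite {M : Matrix (Fin n) (Fin n) ℝ} {x : Fin n → ℝ}
    (p : Fin n → Fin n → Prop) (f : Fin n → Fin n → ℕ)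
    (h0 : ∀ i j, ¬ p i j → M i j = 0)
    (h1 : ∀ i j, p i j → ∃ h : f i j < n, M i j = x ⟨f i j, h⟩)
    (hf : ∀ j i i', p i j → p i' j → f i j = f i' j → i = i') :
    matNorm1 M ≤ vecNorm1 x := by
  classical
  refine matNorm1_le (vecNorm1_nonneg x) fun j => ?_
  have e : ∑ i, |M i j| = ∑ i ∈ Finset.univ.filter (p · j), |M i j| := by
    rw [Finset.sum_filter]
    refine Finset.sum_congr rfl fun i _ => ?_
    split_ifs with h
    · rfl
    · rw [h0 i j h, abs_zero]
  rw [e]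
  -- `f · j` totalised as a map into `Fin n`; its values off `p` play no role
  let g : Fin n → Fin n := fun i => if h : f i j < n then ⟨f i j, h⟩ else i
  have hg : ∀ i, p i j → (g i : ℕ) = f i j ∧ M i j = x (g i) := fun i hi => by
    obtain ⟨h, hM⟩ := h1 i j hi
    simp [g, h, hM]
  have inj : Set.InjOn g (Finset.univ.filter (p · j) : Finset (Fin n)) := by
    intro a ha b hb hab
    simp only [Finset.coe_filter, Finset.mem_univ, true_and, Set.mem_ofPred_eq] at ha hb
    exact hf j a b ha hb (by rw [← (hg a ha).1, ← (hg b hb).1, hab])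
  calc ∑ i ∈ Finset.univ.filter (p · j), |M i j|
      = ∑ i ∈ Finset.univ.filter (p · j), |x (g i)| :=
        Finset.sum_congr rfl fun i hi => by rw [(hg i (Finset.mem_filter.1 hi).2).2]
    _ = ∑ k ∈ (Finset.univ.filter (p · j)).image g, |x k| := by
        rw [Finset.sum_image inj]
    _ ≤ vecNorm1 x :=
        Finset.sum_le_sum_of_subset_of_nonneg (Finset.subset_univ _) fun _ _ _ => abs_nonneg _

end Norms

section GohbergSemencul

variable {n : ℕ}

lemma matNorm1_Lmat_le (x : Fin n → ℝ) : matNorm1 (Lmat x) ≤ vecNorm1 x := by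
  refine matNorm1_le_of_dite (fun i j => (j : ℕ) ≤ i) (fun i j => (i : ℕ) - j) ?_ ?_ ?_
  · intro i j h
    simp only [Lmat, Matrix.of_apply, if_neg h]
  · intro i j h
    exact ⟨by omega, by simp only [Lmat, Matrix.of_apply, if_pos h]⟩
  · intro j i i' h h' e
    ext
    omega

lemma matNorm1_Rmat_le (x : Fin n → ℝ) : matNorm1 (Rmat x) ≤ vecNorm1 x := by
  refine matNorm1_le_of_dite (fun i j => (i : ℕ) ≤ j) (fun i j => n - 1 - ((j : ℕ) - i)) ?_ ?_ ?_
  · intro i j h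
    simp only [Rmat, Matrix.of_apply, if_neg h]
  · intro i j h
    exact ⟨by omega, by simp only [Rmat, Matrix.of_apply, if_pos h]⟩
  · intro j i i' h h' e
    ext
    omega

lemma matNorm1_L0mat_le (x : Fin n → ℝ) : matNorm1 (L0mat x) ≤ vecNorm1 x := by
  refine matNorm1_le_of_dite (fun i j => (j : ℕ) < i) (fun i j => (i : ℕ) - j - 1) ?_ ?_ ?_
  · intro i j h
    simp only [L0mat, Matrix.of_apply, if_neg h]
  · intro i j h
    exact ⟨by omega, by simp only [L0mat, Matrix.of_apply, if_pos h]⟩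
  · intro j i i' h h' e
    ext
    omega

lemma matNorm1_R0mat_le (x : Fin n → ℝ) : matNorm1 (R0mat x) ≤ vecNorm1 x := by
  refine matNorm1_le_of_dite (fun i j => (i : ℕ) < j) (fun i j => n - ((j : ℕ) - i)) ?_ ?_ ?_
  · intro i j h
    simp only [R0mat, Matrix.of_apply, dif_neg h]
  · intro i j h
    exact ⟨by omega, by simp only [R0mat, Matrix.of_apply, dif_pos h]⟩
  · intro j i i' h h' e
    ext
    omega

/-- The bilinear form `B x y = L_x R_y - L⁰_y R⁰_x`, i.e. the Gohberg–Semencul expression without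
its scalar factor. -/
def gsForm (x y : Fin n → ℝ) : Matrix (Fin n) (Fin n) ℝ :=
  Lmat x * Rmat y - L0mat y * R0mat x

lemma matNorm1_gsForm_le (x y : Fin n → ℝ) :
    matNorm1 (gsForm x y) ≤ 2 * (vecNorm1 x * vecNorm1 y) := by
  have a : matNorm1 (Lmat x * Rmat y) ≤ vecNorm1 x * vecNorm1 y :=
    (matNorm1_mul_le _ _).trans (mul_le_mul (matNorm1_Lmat_le x) (matNorm1_Rmat_le y)
      (matNorm1_nonneg _) (vecNorm1_nonneg x))
  have b : matNorm1 (L0mat y * R0mat x) ≤ vecNorm1 y * vecNorm1 x :=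
    (matNorm1_mul_le _ _).trans (mul_le_mul (matNorm1_L0mat_le y) (matNorm1_R0mat_le x)
      (matNorm1_nonneg _) (vecNorm1_nonneg y))
  have c := matNorm1_sub_le (Lmat x * Rmat y) (L0mat y * R0mat x)
  unfold gsForm
  linarith

lemma Lmat_sub (x y : Fin n → ℝ) : Lmat (x - y) = Lmat x - Lmat y := by
  ext i j
  simp only [Lmat, Matrix.of_apply, Matrix.sub_apply, Pi.sub_apply]
  split_ifs <;> simp

lemma Rmat_sub (x y : Fin n → ℝ) : Rmat (x - y) = Rmat x - Rmat y := by
  ext i j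
  simp only [Rmat, Matrix.of_apply, Matrix.sub_apply, Pi.sub_apply]
  split_ifs <;> simp

lemma L0mat_sub (x y : Fin n → ℝ) : L0mat (x - y) = L0mat x - L0mat y := by
  ext i j
  simp only [L0mat, Matrix.of_apply, Matrix.sub_apply, Pi.sub_apply]
  split_ifs <;> simp

lemma R0mat_sub (x y : Fin n → ℝ) : R0mat (x - y) = R0mat x - R0mat y := by
  ext i j
  simp only [R0mat, Matrix.of_apply, Matrix.sub_apply, Pi.sub_apply]
  split_ifs <;> simp

lemma Lmat_smul (c : ℝ) (x : Fin n → ℝ) : Lmat (c • x) = c • Lmat x := by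
  ext i j
  simp [Lmat]

lemma R0mat_smul (c : ℝ) (x : Fin n → ℝ) : R0mat (c • x) = c • R0mat x := by
  ext i j
  simp [R0mat]

lemma GSF_eq_gsForm [NeZero n] (x y : Fin n → ℝ) : GSF x y = gsForm ((x 0)⁻¹ • x) y := by
  simp only [GSF, gsForm, Lmat_smul, R0mat_smul, smul_sub, Matrix.smul_mul, Matrix.mul_smul]

lemma gsForm_sub_gsForm (u v y z : Fin n → ℝ) :
    gsForm u y - gsForm v z = gsForm u (y - z) + gsForm (u - v) z := by
  simp only [gsForm, Lmat_sub, Rmat_sub, L0mat_sub, R0mat_sub]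
  noncomm_ring

end GohbergSemencul

/-- Corollary 3.1: relative 1-norm error bound in terms of the GSF condition number. -/
theorem gsf_rel_error_condition_number {n : ℕ} [NeZero n] (T : Matrix (Fin n) (Fin n) ℝ)
    (hT : IsUnit T) (x y xt yt : Fin n → ℝ)
    (hTx : T.mulVec x = Pi.single 0 1)
    (hTy : T.mulVec y = Pi.single (lastIdx n) 1)
    (hx : x 0 ≠ 0) (hGSF : T⁻¹ = GSF x y)
    (hxt : xt 0 ≠ 0) (ε : ℝ) (hε : 0 < ε)
    (h1 : vecNorm1 (xt - x) ≤ ε * vecNorm1 x)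
    (h2 : vecNorm1 (yt - y) ≤ ε * vecNorm1 y)
    (εt : ℝ) (hεt : εt = |1 / x 0 - 1 / xt 0| / |1 / x 0|) :
    matNorm1 (T⁻¹ - GSF xt yt) / matNorm1 T⁻¹ ≤
      matNorm1 T * vecNorm1 y * vecNorm1 x / |x 0| *
        (2 * (ε + (ε + (1 + ε) * εt) * (1 + ε))) := by
  have hX := vecNorm1_nonneg x
  have hY := vecNorm1_nonneg y
  have hc : 0 < |(x 0)⁻¹| := abs_pos.2 (inv_ne_zero hx)
  have hεt0 : 0 ≤ εt := by rw [hεt]; positivity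
  have hdiff : |(x 0)⁻¹ - (xt 0)⁻¹| = |(x 0)⁻¹| * εt := by
    rw [hεt, one_div, one_div]
    field_simp
  have hxtn : vecNorm1 xt ≤ (1 + ε) * vecNorm1 x := by
    have := vecNorm1_add_le (xt - x) x
    rw [sub_add_cancel] at this
    linarith
  have hytn : vecNorm1 yt ≤ (1 + ε) * vecNorm1 y := by
    have := vecNorm1_add_le (yt - y) y
    rw [sub_add_cancel] at this
    linarith
  -- error of the scaled vector `x / ξ₀`
  have hu : vecNorm1 ((x 0)⁻¹ • x - (xt 0)⁻¹ • xt) ≤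
      |(x 0)⁻¹| * vecNorm1 x * (ε + (1 + ε) * εt) := by
    have e : (x 0)⁻¹ • x - (xt 0)⁻¹ • xt =
        (x 0)⁻¹ • (x - xt) + ((x 0)⁻¹ - (xt 0)⁻¹) • xt := by
      rw [smul_sub, sub_smul]; abel
    rw [e]
    refine (vecNorm1_add_le _ _).trans ?_
    rw [vecNorm1_smul, vecNorm1_smul, hdiff, vecNorm1_sub_comm]
    have a := mul_le_mul_of_nonneg_left h1 hc.le
    have b := mul_le_mul_of_nonneg_left hxtn (mul_nonneg hc.le hεt0)
    linarith
  have hmain : matNorm1 (T⁻¹ - GSF xt yt) ≤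
      vecNorm1 y * vecNorm1 x / |x 0| * (2 * (ε + (ε + (1 + ε) * εt) * (1 + ε))) := by
    rw [hGSF, GSF_eq_gsForm, GSF_eq_gsForm, gsForm_sub_gsForm]
    refine (matNorm1_add_le _ _).trans ?_
    have a := matNorm1_gsForm_le ((x 0)⁻¹ • x) (y - yt)
    have b := matNorm1_gsForm_le ((x 0)⁻¹ • x - (xt 0)⁻¹ • xt) yt
    rw [vecNorm1_smul, vecNorm1_sub_comm] at a
    have a' := mul_le_mul_of_nonneg_left h2 (mul_nonneg hc.le hX)
    have b' := mul_le_mul hu hytn (vecNorm1_nonneg yt) (by positivity)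
    rw [div_eq_mul_inv, ← abs_inv]
    linarith
  have hTT : 1 ≤ matNorm1 T * matNorm1 T⁻¹ := by
    have h := matNorm1_mul_le T T⁻¹
    rwa [Matrix.mul_nonsing_inv T ((Matrix.isUnit_iff_isUnit_det T).1 hT), matNorm1_one] at h
  have hpos : 0 < matNorm1 T⁻¹ := by
    refine (matNorm1_nonneg _).lt_of_ne fun h => ?_
    rw [← h, mul_zero] at hTT
    linarith
  rw [div_le_iff₀ hpos]
  refine hmain.trans ?_
  have hK : 0 ≤ vecNorm1 y * vecNorm1 x / |x 0| *
      (2 * (ε + (ε + (1 + ε) * εt) * (1 + ε))) := by positivity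
  calc _ ≤ _ := le_mul_of_one_le_right hK hTT
    _ = _ := by ring

end
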